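/- arXiv:1810.04209 — 2 statements merged into one kernel-verified Lean document; each statement's English description precedes it below -/
import Mathlib

section
/- Under the hypotheses of the Ψ-Gronwall inequality (u, v nonnegative integrable, g nonnegative nondecreasing continuous, u(t) ≤ v(t) + g(t)∫_a^t Ψ'(s)(Ψ(t)-Ψ(s))^{μ-1} u(s) ds), if in addition v is nondecreasing on [a,b], then u(t) ≤ v(t) · E_μ(g(t)Γ(μ)(Ψ(t)-Ψ(a))^μ) for all t ∈ [a,b], where E_μ(z) = Σ_{k=0}^∞ z^k/Γ(μk+1) is the one-parameter Mittag-Leffler function. -/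
open Set Real MeasureTheory

/-- The one-parameter Mittag-Leffler function `E_μ(z) = Σ_{k≥0} z^k / Γ(μk+1)`. -/
noncomputable def mittagLeffler (μ z : ℝ) : ℝ :=
  ∑' k : ℕ, z ^ k / Real.Gamma (μ * k + 1)

open scoped ENNReal

/-- the Abel kernel -/
noncomputable def abelKer (μ z : ℝ) : ℝ≥0∞ := if 0 < z then ENNReal.ofReal (z ^ (μ - 1)) else 0

lemma measurable_abelKer (μ : ℝ) : Measurable (abelKer μ) := by
  unfold abelKer
  exact Measurable.ite measurableSet_Ioi (by fun_prop) measurable_const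

lemma gamma_lower {x R : ℝ} (hx : 0 ≤ x) (hR : 0 < R) :
    R ^ x * rexp (-R) ≤ Real.Gamma (x + 1) := by
  rw [Real.Gamma_eq_integral (by linarith)]
  have h1 := Real.GammaIntegral_convergent (s := x + 1) (by linarith)
  have h2 : ∫ t in Ioi R, R ^ x * rexp (-t) = R ^ x * rexp (-R) := by
    rw [integral_const_mul, integral_exp_neg_Ioi]
  rw [← h2]
  calc ∫ t in Ioi R, R ^ x * rexp (-t) ≤ ∫ t in Ioi R, rexp (-t) * t ^ (x + 1 - 1) := by
        apply setIntegral_mono_on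
        · exact (integrableOn_exp_neg_Ioi R).const_mul _
        · exact h1.mono_set (Ioi_subset_Ioi hR.le)
        · exact measurableSet_Ioi
        · intro t ht
          rw [mul_comm, add_sub_cancel_right]
          have : R ^ x ≤ t ^ x := Real.rpow_le_rpow hR.le (le_of_lt ht) hx
          gcongr
    _ ≤ _ := by
        apply setIntegral_mono_set h1
        · filter_upwards [ae_restrict_mem measurableSet_Ioi] with t ht
          have : (0:ℝ) < t := ht
          simp only [Pi.zero_apply]; positivity
        · exact (Ioi_subset_Ioi hR.le).eventuallyLE

lemma ml_summable {μ z : ℝ} (hμ : 0 < μ) (hz : 0 ≤ z) :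
    Summable (fun k : ℕ => z ^ k / Real.Gamma (μ * k + 1)) := by
  set R : ℝ := (2 * z + 1) ^ (1 / μ) with hR
  have hRpos : 0 < R := by positivity
  have hRμ : R ^ μ = 2 * z + 1 := by
    rw [hR, ← Real.rpow_mul (by positivity), one_div_mul_cancel hμ.ne', Real.rpow_one]
  have hq : z / (2 * z + 1) < 1 := by rw [div_lt_one (by positivity)]; linarith
  refine Summable.of_nonneg_of_le (f := fun k : ℕ => rexp R * (z / (2 * z + 1)) ^ k) ?_ ?_ ?_
  · intro k
    have : 0 < Real.Gamma (μ * k + 1) := Real.Gamma_pos_of_pos (by positivity)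
    positivity
  · intro k
    have h := gamma_lower (x := μ * k) (by positivity) hRpos
    rw [Real.rpow_mul hRpos.le, hRμ, Real.rpow_natCast, Real.exp_neg] at h
    have hp : 0 < (2 * z + 1) ^ k * (rexp R)⁻¹ := by positivity
    calc _ ≤ z ^ k / ((2 * z + 1) ^ k * (rexp R)⁻¹) := by gcongr
      _ = _ := by rw [div_pow]; field_simp
  · exact (summable_geometric_of_lt_one (by positivity) hq).mul_left _

lemma kern_gamma {μ l : ℝ} (hμ : 0 < μ) (hl : 0 < l) :
    ∫⁻ z, ENNReal.ofReal (rexp (-(l * z))) * abelKer μ z = ENNReal.ofReal (Real.Gamma μ / l ^ μ) := by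
  have hG := Real.Gamma_pos_of_pos hμ
  have h := ProbabilityTheory.lintegral_gammaPDF_eq_one hμ hl
  calc _ = ∫⁻ z, ENNReal.ofReal (Real.Gamma μ / l ^ μ) * ProbabilityTheory.gammaPDF μ l z := by
        apply lintegral_congr_ae
        have : ∀ᵐ z : ℝ, z ≠ 0 := by simp [ae_iff]
        filter_upwards [this] with z hz
        rcases lt_or_gt_of_ne hz with h0 | h0
        · rw [ProbabilityTheory.gammaPDF_of_neg h0]; simp [abelKer, h0.not_gt]
        · rw [ProbabilityTheory.gammaPDF_of_nonneg h0.le, abelKer, if_pos h0,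
            ← ENNReal.ofReal_mul (by positivity), ← ENNReal.ofReal_mul (by positivity)]
          congr 1
          field_simp
    _ = _ := by
        rw [lintegral_const_mul, h, mul_one]
        unfold ProbabilityTheory.gammaPDF
        fun_prop

lemma kern_beta {μ c x L : ℝ} (hμ : 0 < μ) (hc : 0 < c) (hx : 0 < x) :
    ∫⁻ y in Icc 0 L, abelKer μ (x - y) * ENNReal.ofReal (y ^ (c - 1)) ≤
      ENNReal.ofReal (x ^ (μ + c - 1) * (Real.Gamma μ * Real.Gamma c / Real.Gamma (μ + c))) := by
  have hG := Real.Gamma_pos_of_pos hμ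
  have hGc := Real.Gamma_pos_of_pos hc
  have hGs := Real.Gamma_pos_of_pos (add_pos hμ hc)
  have hb := ProbabilityTheory.beta_pos hc hμ
  have h := ProbabilityTheory.lintegral_betaPDF_eq_one hc hμ
  rw [ProbabilityTheory.lintegral_betaPDF] at h
  have himg : (fun z => x * z) '' Ioo 0 1 = Ioo 0 x := by
    rw [Set.image_mul_left_Ioo hx]; simp
  calc _ ≤ ∫⁻ y in Ioo 0 x, abelKer μ (x - y) * ENNReal.ofReal (y ^ (c - 1)) := by
        rw [← lintegral_indicator measurableSet_Icc, ← lintegral_indicator measurableSet_Ioo]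
        apply lintegral_mono_ae
        have : ∀ᵐ z : ℝ, z ≠ 0 := by simp [ae_iff]
        filter_upwards [this] with y hy
        by_cases h1 : y ∈ Icc 0 L
        · by_cases h2 : y < x
          · have : y ∈ Ioo 0 x := ⟨lt_of_le_of_ne h1.1 (Ne.symm hy), h2⟩
            simp [h1, this]
          · have : ¬ (0 < x - y) := by linarith
            simp [abelKer, h2]
        · simp [h1]
    _ = ∫⁻ z in Ioo 0 1, ENNReal.ofReal |x| *
          (abelKer μ (x - x * z) * ENNReal.ofReal ((x * z) ^ (c - 1))) := by
        rw [← himg]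
        exact lintegral_image_eq_lintegral_abs_deriv_mul (f' := fun _ => x) measurableSet_Ioo
          (fun z _ => by simpa using ((hasDerivAt_id z).const_mul x).hasDerivWithinAt)
          (fun z _ w _ h => by simpa [hx.ne'] using h) _
    _ = ∫⁻ z in Ioo (0:ℝ) 1, ENNReal.ofReal (x ^ (μ + c - 1) * ProbabilityTheory.beta c μ) *
          ENNReal.ofReal (1 / ProbabilityTheory.beta c μ * z ^ (c - 1) * (1 - z) ^ (μ - 1)) := by
        apply setLIntegral_congr_fun measurableSet_Ioo
        intro z hz
        have h1 : 0 < 1 - z := by linarith [hz.2]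
        have hz0 := hz.1
        have h2 : x - x * z = x * (1 - z) := by ring
        have h3 : 0 < x * (1 - z) := by positivity
        simp only
        rw [abelKer, h2, if_pos h3, abs_of_pos hx, ← ENNReal.ofReal_mul (by positivity),
          ← ENNReal.ofReal_mul (by positivity), ← ENNReal.ofReal_mul (by positivity)]
        congr 1
        rw [Real.mul_rpow hx.le h1.le, Real.mul_rpow hx.le hz0.le]
        have : x ^ (μ + c - 1) = x * (x ^ (μ - 1) * x ^ (c - 1)) := by
          rw [← Real.rpow_add hx]
          nth_rw 2 [← Real.rpow_one x]
          rw [← Real.rpow_add hx]; congr 1; ring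
        rw [this]
        field_simp
    _ = _ := by
        rw [lintegral_const_mul _ (by fun_prop), h, mul_one, ProbabilityTheory.beta, mul_comm (Gamma c),
          add_comm c]
    _ ≤ _ := le_rfl

/-- candidate solution -/
noncomputable def mlF (μ G V x : ℝ) : ℝ≥0∞ :=
  ∑' k : ℕ, ENNReal.ofReal (V * ((G * Real.Gamma μ) ^ k / Real.Gamma (μ * k + 1))) * ENNReal.ofReal (x ^ (μ * k))

lemma measurable_mlF (μ G V : ℝ) : Measurable (mlF μ G V) := by
  unfold mlF
  fun_prop

lemma mlF_eq {μ G V x : ℝ} (hμ : 0 < μ) (hG : 0 ≤ G) (hV : 0 ≤ V) (hx : 0 ≤ x) :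
    mlF μ G V x = ENNReal.ofReal (V * mittagLeffler μ (G * Real.Gamma μ * x ^ μ)) := by
  have hg := Real.Gamma_pos_of_pos hμ
  have hs := ml_summable (μ := μ) (z := G * Real.Gamma μ * x ^ μ) hμ (by positivity)
  rw [mittagLeffler, ← tsum_mul_left, ENNReal.ofReal_tsum_of_nonneg _ (hs.mul_left V)]
  · unfold mlF
    congr 1; ext k
    have : 0 < Real.Gamma (μ * k + 1) := Real.Gamma_pos_of_pos (by positivity)
    rw [← ENNReal.ofReal_mul (by positivity), Real.rpow_mul hx, Real.rpow_natCast]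
    congr 1
    rw [mul_pow (G * Gamma μ)]; ring
  · intro k
    have : 0 < Real.Gamma (μ * k + 1) := Real.Gamma_pos_of_pos (by positivity)
    positivity

lemma mlF_super {μ G V x L : ℝ} (hμ : 0 < μ) (hG : 0 ≤ G) (hV : 0 ≤ V) (hx : 0 ≤ x) :
    ENNReal.ofReal V + ENNReal.ofReal G * ∫⁻ y in Icc 0 L, abelKer μ (x - y) * mlF μ G V y ≤
      mlF μ G V x := by
  have hg := Real.Gamma_pos_of_pos hμ
  have hgk : ∀ k : ℕ, 0 < Real.Gamma (μ * k + 1) := fun k => Real.Gamma_pos_of_pos (by positivity)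
  conv_rhs => rw [mlF, tsum_eq_zero_add' ENNReal.summable]
  gcongr
  · simp
  rcases hx.eq_or_lt with rfl | hx0
  · have : ∫⁻ y in Icc 0 L, abelKer μ (0 - y) * mlF μ G V y = 0 := by
      apply setLIntegral_eq_zero measurableSet_Icc
      intro y hy
      have : ¬ y < 0 := not_lt.mpr hy.1
      simp [abelKer, this]
    rw [this]; simp
  have hm : Measurable fun y => abelKer μ (x - y) := (measurable_abelKer μ).comp (by fun_prop)
  simp_rw [mlF, ← ENNReal.tsum_mul_left]
  rw [lintegral_tsum (fun k => by fun_prop), ← ENNReal.tsum_mul_left]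
  apply ENNReal.tsum_le_tsum
  intro k
  have hk := hgk k
  have hk1 := hgk (k + 1)
  have hb := kern_beta (μ := μ) (c := μ * k + 1) (x := x) (L := L) hμ (by positivity) hx0
  rw [add_sub_cancel_right] at hb
  simp_rw [mul_left_comm (abelKer μ _)]
  rw [lintegral_const_mul _ (by fun_prop)]
  calc _ ≤ ENNReal.ofReal G * (ENNReal.ofReal (V * ((G * Real.Gamma μ) ^ k / Real.Gamma (μ * k + 1))) * ENNReal.ofReal (x ^ (μ + (μ * k + 1) - 1) * (Real.Gamma μ * Real.Gamma (μ * k + 1) / Real.Gamma (μ + (μ * k + 1))))) := by gcongr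
    _ = _ := by
      have e1 : μ + (μ * k + 1) = μ * ((k + 1 : ℕ) : ℝ) + 1 := by push_cast; ring
      rw [e1, add_sub_cancel_right, ← ENNReal.ofReal_mul (by positivity),
        ← ENNReal.ofReal_mul (by positivity), ← ENNReal.ofReal_mul (by positivity)]
      congr 1
      rw [pow_succ]
      field_simp

lemma abel_contract {μ L G : ℝ} (hμ : 0 < μ) (hG : 0 ≤ G) (d : ℝ → ℝ≥0∞)
    (hd : AEMeasurable d (volume.restrict (Icc 0 L)))
    (hfin : ∫⁻ y in Icc 0 L, d y ≠ ∞)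
    (h : ∀ x ∈ Icc 0 L, d x ≤ ENNReal.ofReal G * ∫⁻ y in Icc 0 L, abelKer μ (x - y) * d y) :
    ∀ x ∈ Icc 0 L, d x = 0 := by
  have hg := Real.Gamma_pos_of_pos hμ
  set l : ℝ := (2 * G * Real.Gamma μ + 1) ^ (1 / μ) with hl
  have hl0 : 0 < l := by positivity
  have hlμ : l ^ μ = 2 * G * Real.Gamma μ + 1 := by
    rw [hl, ← Real.rpow_mul (by positivity), one_div_mul_cancel hμ.ne', Real.rpow_one]
  set w : ℝ → ℝ≥0∞ := fun x => ENNReal.ofReal (rexp (-(l * x))) with hw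
  have hwm : Measurable w := by rw [hw]; fun_prop
  have hkm : Measurable fun p : ℝ × ℝ => abelKer μ (p.1 - p.2) :=
    (measurable_abelKer μ).comp (by fun_prop)
  set N := ∫⁻ x in Icc 0 L, w x * d x with hN
  have hNfin : N ≠ ∞ := by
    refine ne_top_of_le_ne_top hfin ?_
    apply setLIntegral_mono' measurableSet_Icc
    intro x hx
    have : w x ≤ 1 := by
      rw [hw]; simp only [ENNReal.ofReal_le_one, Real.exp_le_one_iff]
      nlinarith [hx.1]
    calc w x * d x ≤ 1 * d x := by gcongr
      _ = d x := one_mul _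
  have hN2 : N ≤ ENNReal.ofReal (G * (Real.Gamma μ / l ^ μ)) * N := by
    calc N ≤ ∫⁻ x in Icc 0 L, ENNReal.ofReal G * ∫⁻ y in Icc 0 L, w x * (abelKer μ (x - y) * d y) := by
          apply setLIntegral_mono' measurableSet_Icc
          intro x hx
          calc w x * d x ≤ w x * (ENNReal.ofReal G * ∫⁻ y in Icc 0 L, abelKer μ (x - y) * d y) := by
                gcongr; exact h x hx
            _ = _ := by
                rw [mul_left_comm, lintegral_const_mul' _ _ (by simp [hw])]
      _ = ENNReal.ofReal G * ∫⁻ x in Icc 0 L, ∫⁻ y in Icc 0 L, w x * (abelKer μ (x - y) * d y) := by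
          rw [lintegral_const_mul' _ _ (by simp)]
      _ = ENNReal.ofReal G * ∫⁻ y in Icc 0 L, ∫⁻ x in Icc 0 L, w x * (abelKer μ (x - y) * d y) := by
          rw [lintegral_lintegral_swap]
          apply AEMeasurable.mul
          · exact (hwm.comp measurable_fst).aemeasurable
          · exact hkm.aemeasurable.mul hd.comp_snd
      _ ≤ ENNReal.ofReal G * ∫⁻ y in Icc 0 L, ENNReal.ofReal (Real.Gamma μ / l ^ μ) * (w y * d y) := by
          gcongr with y
          calc ∫⁻ x in Icc 0 L, w x * (abelKer μ (x - y) * d y)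
              ≤ ∫⁻ x, w x * (abelKer μ (x - y) * d y) := setLIntegral_le_lintegral _ _
            _ = ∫⁻ x, (w (x - y) * abelKer μ (x - y)) * (w y * d y) := by
                congr 1; ext x
                have : w x = w (x - y) * w y := by
                  simp only [hw]
                  rw [← ENNReal.ofReal_mul (by positivity), ← Real.exp_add]
                  congr 2; ring
                rw [this]; ring
            _ = (∫⁻ x, w (x - y) * abelKer μ (x - y)) * (w y * d y) := by
                rw [lintegral_mul_const]
                exact (hwm.comp (by fun_prop)).mul ((measurable_abelKer μ).comp (by fun_prop))
            _ = _ := by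
                rw [lintegral_sub_right_eq_self (fun x => w x * abelKer μ x) y, kern_gamma hμ hl0]
      _ = _ := by
          rw [lintegral_const_mul' _ _ (by simp), ENNReal.ofReal_mul hG, mul_assoc]
  have hN0 : N = 0 := by
    by_contra hne
    have hlt : ENNReal.ofReal (G * (Real.Gamma μ / l ^ μ)) < 1 := by
      rw [ENNReal.ofReal_lt_one, hlμ, ← mul_div_assoc, div_lt_one (by positivity)]
      nlinarith [mul_nonneg hG hg.le]
    have := ENNReal.mul_lt_mul_left hne hNfin hlt
    rw [one_mul] at this
    exact absurd hN2 (not_le.mpr this)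
  have hae : d =ᵐ[volume.restrict (Icc 0 L)] 0 := by
    replace hN0 := (lintegral_eq_zero_iff' (hwm.aemeasurable.mul hd)).mp (hN ▸ hN0)
    filter_upwards [hN0] with x hx
    simp only [Pi.zero_apply, Pi.mul_apply, mul_eq_zero] at hx
    rcases hx with hx | hx
    · exfalso
      simp only [hw, ENNReal.ofReal_eq_zero] at hx
      exact absurd hx (not_le.mpr (Real.exp_pos _))
    · exact hx
  intro x hx
  have h0 : ∫⁻ y in Icc 0 L, abelKer μ (x - y) * d y = 0 := by
    rw [← lintegral_zero (μ := volume.restrict (Icc 0 L))]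
    apply lintegral_congr_ae
    filter_upwards [hae] with y hy
    simp [hy]
  have := h x hx
  rw [h0, mul_zero] at this
  exact le_antisymm this zero_le

lemma abel_gronwall {μ L G V : ℝ} (hμ : 0 < μ) (hG : 0 ≤ G) (hV : 0 ≤ V) (W : ℝ → ℝ≥0∞)
    (hW : AEMeasurable W (volume.restrict (Icc 0 L)))
    (hfin : ∫⁻ y in Icc 0 L, W y ≠ ∞)
    (h : ∀ x ∈ Icc 0 L, W x ≤ ENNReal.ofReal V +
      ENNReal.ofReal G * ∫⁻ y in Icc 0 L, abelKer μ (x - y) * W y) :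
    ∀ x ∈ Icc 0 L, W x ≤ ENNReal.ofReal (V * mittagLeffler μ (G * Real.Gamma μ * x ^ μ)) := by
  have hFm := measurable_mlF μ G V
  have key := abel_contract hμ hG (fun x => W x - mlF μ G V x) (hW.sub hFm.aemeasurable)
    (ne_top_of_le_ne_top hfin (lintegral_mono fun x => tsub_le_self)) (by
      intro x hx
      have hkm : Measurable fun y => abelKer μ (x - y) := (measurable_abelKer μ).comp (by fun_prop)
      rw [tsub_le_iff_right]
      calc W x ≤ ENNReal.ofReal V + ENNReal.ofReal G * ∫⁻ y in Icc 0 L, abelKer μ (x - y) * W y := h x hx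
        _ ≤ ENNReal.ofReal V + ENNReal.ofReal G * ∫⁻ y in Icc 0 L,
            (abelKer μ (x - y) * (W y - mlF μ G V y) + abelKer μ (x - y) * mlF μ G V y) := by
            gcongr with y
            rw [← mul_add]
            gcongr
            exact le_tsub_add
        _ = ENNReal.ofReal G * (∫⁻ y in Icc 0 L, abelKer μ (x - y) * (W y - mlF μ G V y)) +
            (ENNReal.ofReal V + ENNReal.ofReal G * ∫⁻ y in Icc 0 L, abelKer μ (x - y) * mlF μ G V y) := by
            rw [lintegral_add_right _ (show Measurable fun y => abelKer μ (x - y) * mlF μ G V y from hkm.mul hFm)]; ring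
        _ ≤ _ := by
            gcongr
            exact mlF_super hμ hG hV hx.1)
  intro x hx
  rw [← mlF_eq hμ hG hV hx.1]
  exact tsub_eq_zero_iff_le.mp (key x hx)

/-- Ψ-Gronwall lemma (Mittag-Leffler form): if moreover `v` is nondecreasing,
then `u(t) ≤ v(t) E_μ(g(t) Γ(μ) (Ψ(t)-Ψ(a))^μ)`. -/
theorem psi_gronwall_mittagLeffler (Ψ : ℝ → ℝ) (a b μ : ℝ) (u v g : ℝ → ℝ) (hab : a < b)
    (hΨC1 : ContDiffOn ℝ 1 Ψ (Icc a b)) (hΨmono : StrictMonoOn Ψ (Icc a b))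
    (hΨ' : ∀ t ∈ Icc a b, deriv Ψ t ≠ 0) (hμ : 0 < μ)
    (hu_int : IntegrableOn u (Icc a b)) (hv_int : IntegrableOn v (Icc a b))
    (hu_nonneg : ∀ t ∈ Icc a b, 0 ≤ u t) (hv_nonneg : ∀ t ∈ Icc a b, 0 ≤ v t)
    (hg_cont : ContinuousOn g (Icc a b)) (hg_nonneg : ∀ t ∈ Icc a b, 0 ≤ g t)
    (hg_mono : MonotoneOn g (Icc a b)) (hv_mono : MonotoneOn v (Icc a b))
    (hineq : ∀ t ∈ Icc a b,
      u t ≤ v t + g t * ∫ s in a..t, deriv Ψ s * (Ψ t - Ψ s) ^ (μ - 1) * u s) :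
    ∀ t ∈ Icc a b,
      u t ≤ v t * mittagLeffler μ (g t * Real.Gamma μ * (Ψ t - Ψ a) ^ μ) := by
  intro T hT
  have hder : ∀ s ∈ Icc a b, HasDerivAt Ψ (deriv Ψ s) s := fun s hs =>
    (differentiableAt_of_deriv_ne_zero (hΨ' s hs)).hasDerivAt
  have hcont : ContinuousOn (deriv Ψ) (Icc a b) := by
    refine (hΨC1.continuousOn_derivWithin (uniqueDiffOn_Icc hab) le_rfl).congr ?_
    intro s hs
    exact ((hder s hs).hasDerivWithinAt.derivWithin (uniqueDiffOn_Icc hab s hs)).symm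
  have hsub : Icc a T ⊆ Icc a b := Icc_subset_Icc_right hT.2
  have haT : a ∈ Icc a T := ⟨le_rfl, hT.1⟩
  set Φ : ℝ → ℝ := fun s => Ψ s - Ψ a with hΦ
  have hΦmono : StrictMonoOn Φ (Icc a T) := fun x hx y hy hxy => by
    have := hΨmono (hsub hx) (hsub hy) hxy
    simp only [hΦ]; linarith
  have hΦder : ∀ s ∈ Icc a T, HasDerivWithinAt Φ (deriv Ψ s) (Icc a T) s := fun s hs =>
    ((hder s (hsub hs)).sub_const (Ψ a)).hasDerivWithinAt
  have hΦa : Φ a = 0 := by simp [hΦ]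
  have himg : Φ '' Icc a T = Icc 0 (Φ T) := by
    apply Subset.antisymm
    · rintro _ ⟨s, hs, rfl⟩
      rw [← hΦa]
      exact ⟨hΦmono.monotoneOn haT hs hs.1, hΦmono.monotoneOn hs ⟨hT.1, le_rfl⟩ hs.2⟩
    · rw [← hΦa]
      exact intermediate_value_Icc hT.1 (fun s hs => (hΦder s hs).continuousWithinAt)
  set inv := Function.invFunOn Φ (Icc a T) with hinv
  have hleft : ∀ s ∈ Icc a T, inv (Φ s) = s := fun s hs =>
    hΦmono.injOn.leftInvOn_invFunOn hs
  have hWint : IntegrableOn (fun y => u (inv y)) (Icc 0 (Φ T)) := by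
    rw [← himg, integrableOn_image_iff_integrableOn_abs_deriv_smul measurableSet_Icc hΦder
      hΦmono.injOn]
    have h1 : IntegrableOn (fun s => |deriv Ψ s| * u s) (Icc a T) :=
      (hu_int.mono_set hsub).continuousOn_mul ((hcont.mono hsub).abs) isCompact_Icc
    refine h1.congr_fun ?_ measurableSet_Icc
    intro s hs
    simp only [hleft s hs, smul_eq_mul]
  have hL : Φ T ∈ Icc 0 (Φ T) := by
    rw [← himg]; exact ⟨T, ⟨hT.1, le_rfl⟩, rfl⟩
  have key := abel_gronwall hμ (hg_nonneg T hT) (hv_nonneg T hT) (L := Φ T)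
    (fun y => ENNReal.ofReal (u (inv y))) hWint.aestronglyMeasurable.aemeasurable.ennreal_ofReal
    hWint.lintegral_lt_top.ne ?_ (Φ T) hL
  · simp only [hleft T ⟨hT.1, le_rfl⟩] at key
    refine (ENNReal.ofReal_le_ofReal_iff ?_).mp key
    apply mul_nonneg (hv_nonneg T hT)
    apply tsum_nonneg
    intro k
    have h1 : 0 < Real.Gamma (μ * k + 1) := Real.Gamma_pos_of_pos (by positivity)
    have h2 := Real.Gamma_pos_of_pos hμ
    have h3 := hg_nonneg T hT
    have h4 := hL.1
    positivity
  · intro x hx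
    rw [← himg] at hx
    obtain ⟨t, ht, rfl⟩ := hx
    have htb := hsub ht
    simp only [hleft t ht]
    have hTb : T ∈ Icc a b := hT
    have hbound : ENNReal.ofReal (∫ s in a..t, deriv Ψ s * (Ψ t - Ψ s) ^ (μ - 1) * u s) ≤
        ∫⁻ y in Icc 0 (Φ T), abelKer μ (Φ t - y) * ENNReal.ofReal (u (inv y)) := by
      rw [← himg, lintegral_image_eq_lintegral_abs_deriv_mul measurableSet_Icc hΦder hΦmono.injOn,
        intervalIntegral.integral_of_le ht.1, integral_Ioc_eq_integral_Ioo]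
      calc _ ≤ ‖∫ s in Ioo a t, deriv Ψ s * (Ψ t - Ψ s) ^ (μ - 1) * u s‖ₑ := by
            rw [← ofReal_norm_eq_enorm]
            exact ENNReal.ofReal_le_ofReal (le_abs_self _)
        _ ≤ ∫⁻ s in Ioo a t, ‖deriv Ψ s * (Ψ t - Ψ s) ^ (μ - 1) * u s‖ₑ :=
            enorm_integral_le_lintegral_enorm _
        _ = ∫⁻ s in Ioo a t, ENNReal.ofReal |deriv Ψ s| *
              (abelKer μ (Φ t - Φ s) * ENNReal.ofReal (u (inv (Φ s)))) := by
            apply setLIntegral_congr_fun measurableSet_Ioo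
            intro s hs
            have hsT : s ∈ Icc a T := ⟨hs.1.le, hs.2.le.trans ht.2⟩
            have e : Φ t - Φ s = Ψ t - Ψ s := by simp [hΦ]
            have hpos : 0 < Ψ t - Ψ s := sub_pos.mpr (hΨmono (hsub hsT) htb hs.2)
            simp only
            rw [hleft s hsT, e, abelKer, if_pos hpos, ← ofReal_norm_eq_enorm, norm_mul, norm_mul,
              Real.norm_eq_abs, Real.norm_of_nonneg (Real.rpow_nonneg hpos.le _),
              Real.norm_of_nonneg (hu_nonneg s (hsub hsT)), mul_assoc,
              ENNReal.ofReal_mul (abs_nonneg _), ENNReal.ofReal_mul (Real.rpow_nonneg hpos.le _)]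
        _ ≤ _ := lintegral_mono_set
            (show Ioo a t ⊆ Icc a T from fun s hs => ⟨hs.1.le, hs.2.le.trans ht.2⟩)
    calc ENNReal.ofReal (u t) ≤ ENNReal.ofReal
          (v t + g t * ∫ s in a..t, deriv Ψ s * (Ψ t - Ψ s) ^ (μ - 1) * u s) :=
          ENNReal.ofReal_le_ofReal (hineq t htb)
      _ ≤ ENNReal.ofReal (v t) + ENNReal.ofReal (g t) *
          ENNReal.ofReal (∫ s in a..t, deriv Ψ s * (Ψ t - Ψ s) ^ (μ - 1) * u s) := by
          rw [← ENNReal.ofReal_mul (hg_nonneg t htb)]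
          exact ENNReal.ofReal_add_le
      _ ≤ _ := by
          gcongr
          · exact hv_mono htb hTb ht.2
          · exact hg_mono htb hTb ht.2
end

section
/- Let Ψ : [a,b] → ℝ be C¹, increasing with Ψ' ≠ 0, 0 < μ ≤ 1, 0 ≤ η ≤ 1, ξ = μ + η(1-μ). If x ∈ C¹_{1-ξ,Ψ}([a,b],ℝ), then I^{μ,Ψ}_{a+} D^{μ,η,Ψ}_{a+} x(t) = x(t) - ((Ψ(t)-Ψ(a))^{ξ-1}/Γ(ξ)) · I^{(1-η)(1-μ),Ψ}_{a+} x(a) for all t ∈ (a,b]. -/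
open Set Real MeasureTheory Filter Topology

/-- Ψ-Riemann–Liouville fractional integral of order `α` (with the convention
`I^{0,Ψ}_{a+} = id`). -/
noncomputable def psiFracInt (Ψ : ℝ → ℝ) (a α : ℝ) (x : ℝ → ℝ) (t : ℝ) : ℝ :=
  if α = 0 then x t
  else (1 / Real.Gamma α) * ∫ s in a..t, deriv Ψ s * (Ψ t - Ψ s) ^ (α - 1) * x s

/-- Ψ-Hilfer fractional derivative of order `μ` and type `η`. -/
noncomputable def psiHilferDeriv (Ψ : ℝ → ℝ) (a μ η : ℝ) (x : ℝ → ℝ) (t : ℝ) : ℝ :=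
  psiFracInt Ψ a (η * (1 - μ))
    (fun r => (1 / deriv Ψ r) * deriv (psiFracInt Ψ a ((1 - η) * (1 - μ)) x) r) t


/-- Working hypotheses on `Ψ`. -/
structure GoodPsi (Ψ : ℝ → ℝ) (a b : ℝ) : Prop where
  mono : StrictMonoOn Ψ (Icc a b)
  der : ∀ r ∈ Icc a b, HasDerivAt Ψ (deriv Ψ r) r
  pos : ∀ r ∈ Icc a b, 0 < deriv Ψ r
  dcont : ContinuousOn (deriv Ψ) (Icc a b)

lemma GoodPsi.cont {Ψ : ℝ → ℝ} {a b : ℝ} (h : GoodPsi Ψ a b) : ContinuousOn Ψ (Icc a b) :=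
  fun r hr => (h.der r hr).continuousAt.continuousWithinAt

lemma GoodPsi.sub {Ψ : ℝ → ℝ} {a b c d : ℝ} (h : GoodPsi Ψ a b) (hac : a ≤ c) (hdb : d ≤ b) :
    GoodPsi Ψ c d := by
  have hs : Icc c d ⊆ Icc a b := Icc_subset_Icc hac hdb
  exact ⟨h.mono.mono hs, fun r hr => h.der r (hs hr), fun r hr => h.pos r (hs hr), h.dcont.mono hs⟩

lemma goodPsi_of (Ψ : ℝ → ℝ) (a b : ℝ) (hab : a < b)
    (hΨC1 : ContDiffOn ℝ 1 Ψ (Icc a b)) (hΨmono : StrictMonoOn Ψ (Icc a b))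
    (hΨ' : ∀ t ∈ Icc a b, deriv Ψ t ≠ 0) : GoodPsi Ψ a b := by
  have hd : ∀ r ∈ Icc a b, HasDerivAt Ψ (deriv Ψ r) r := fun r hr =>
    (differentiableAt_of_deriv_ne_zero (hΨ' r hr)).hasDerivAt
  have hu : UniqueDiffOn ℝ (Icc a b) := uniqueDiffOn_Icc hab
  have he : ∀ r ∈ Icc a b, derivWithin Ψ (Icc a b) r = deriv Ψ r := fun r hr =>
    (hd r hr).hasDerivWithinAt.derivWithin (hu r hr)
  refine ⟨hΨmono, hd, fun r hr => ?_, ?_⟩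
  · have : 0 ≤ derivWithin Ψ (Icc a b) r := hΨmono.monotoneOn.derivWithin_nonneg
    rw [he r hr] at this
    exact lt_of_le_of_ne this (Ne.symm (hΨ' r hr))
  · exact (hΨC1.continuousOn_derivWithin hu le_rfl).congr fun r hr => (he r hr).symm

lemma beta01 {α β : ℝ} (hα : 0 < α) (hβ : 0 < β) :
    IntegrableOn (fun x : ℝ => x ^ (α - 1) * (1 - x) ^ (β - 1)) (Ioo 0 1) ∧
    ∫ x in Ioo (0:ℝ) 1, x ^ (α - 1) * (1 - x) ^ (β - 1) = ProbabilityTheory.beta α β := by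
  have hB := ProbabilityTheory.beta_pos hα hβ
  have h1 := ProbabilityTheory.lintegral_betaPDF_eq_one hα hβ
  rw [ProbabilityTheory.lintegral_betaPDF] at h1
  set f : ℝ → ℝ := fun x => 1 / ProbabilityTheory.beta α β * x ^ (α - 1) * (1 - x) ^ (β - 1)
  have hm : AEStronglyMeasurable f (volume.restrict (Ioo 0 1)) :=
    Measurable.aestronglyMeasurable (by fun_prop)
  have hnn : 0 ≤ᵐ[volume.restrict (Ioo (0:ℝ) 1)] f := by
    refine (ae_restrict_iff' measurableSet_Ioo).2 (Eventually.of_forall fun x hx => ?_)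
    have h1 := hx.1
    have h2 : 0 < 1 - x := by linarith [hx.2]
    simp only [f, Pi.zero_apply]
    positivity
  have hi : IntegrableOn f (Ioo 0 1) := by
    refine ⟨hm, ?_⟩
    rw [hasFiniteIntegral_iff_ofReal hnn, h1]
    exact ENNReal.one_lt_top
  have hv : ∫ x in Ioo (0:ℝ) 1, f x = 1 := by
    rw [integral_eq_lintegral_of_nonneg_ae hnn hm, h1]; rfl
  have he : (fun x : ℝ => x ^ (α - 1) * (1 - x) ^ (β - 1)) =
      fun x => ProbabilityTheory.beta α β * f x := by
    funext x; simp only [f]; field_simp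
  rw [he]
  refine ⟨hi.const_mul _, ?_⟩
  rw [integral_const_mul, hv, mul_one]

lemma psi_beta {Ψ : ℝ → ℝ} {s t : ℝ} (h : GoodPsi Ψ s t) (hst : s < t) {α β : ℝ}
    (hα : 0 < α) (hβ : 0 < β) :
    IntegrableOn (fun r => deriv Ψ r * (Ψ t - Ψ r) ^ (α - 1) * (Ψ r - Ψ s) ^ (β - 1)) (Ioc s t) ∧
    ∫ r in Ioc s t, deriv Ψ r * (Ψ t - Ψ r) ^ (α - 1) * (Ψ r - Ψ s) ^ (β - 1) =
      ProbabilityTheory.beta α β * (Ψ t - Ψ s) ^ (α + β - 1) := by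
  have hs : s ∈ Icc s t := left_mem_Icc.2 hst.le
  have ht : t ∈ Icc s t := right_mem_Icc.2 hst.le
  have hL : 0 < Ψ t - Ψ s := sub_pos.2 (h.mono hs ht hst)
  set L := Ψ t - Ψ s with hLdef
  set φ : ℝ → ℝ := fun r => (Ψ r - Ψ s) / L with hφ
  have hcont : ContinuousOn φ (Icc s t) := (h.cont.sub continuousOn_const).div_const _
  have hmono : StrictMonoOn φ (Icc s t) := fun x hx y hy hxy => by
    have := h.mono hx hy hxy
    simp only [hφ]; gcongr
  have hφs : φ s = 0 := by simp [hφ]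
  have hφt : φ t = 1 := by simp only [hφ]; exact div_self hL.ne'
  have himg : φ '' Ioo s t = Ioo 0 1 := by
    apply Subset.antisymm
    · rintro _ ⟨r, hr, rfl⟩
      have hr' := Ioo_subset_Icc_self hr
      exact ⟨hφs ▸ hmono hs hr' hr.1, hφt ▸ hmono hr' ht hr.2⟩
    · have := intermediate_value_Ioo hst.le hcont
      rwa [hφs, hφt] at this
  have hder : ∀ r ∈ Ioo s t, HasDerivWithinAt φ (deriv Ψ r / L) (Ioo s t) r := fun r hr =>
    (((h.der r (Ioo_subset_Icc_self hr)).sub_const _).div_const _).hasDerivWithinAt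
  have hinj : InjOn φ (Ioo s t) := (hmono.mono Ioo_subset_Icc_self).injOn
  have hB := beta01 hβ hα
  have hcomm : ProbabilityTheory.beta β α = ProbabilityTheory.beta α β := by
    simp only [ProbabilityTheory.beta]; rw [mul_comm, add_comm]
  rw [hcomm] at hB
  have e1 := integrableOn_image_iff_integrableOn_abs_deriv_smul measurableSet_Ioo hder hinj
    (fun x : ℝ => x ^ (β - 1) * (1 - x) ^ (α - 1))
  have e2 := integral_image_eq_integral_abs_deriv_smul measurableSet_Ioo hder hinj
    (fun x : ℝ => x ^ (β - 1) * (1 - x) ^ (α - 1))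
  rw [himg] at e1 e2
  have i1 := e1.1 hB.1
  rw [hB.2] at e2
  have hpt : ∀ r ∈ Ioo s t, deriv Ψ r * (Ψ t - Ψ r) ^ (α - 1) * (Ψ r - Ψ s) ^ (β - 1) =
      L ^ (α + β - 1) * (|deriv Ψ r / L| • (φ r ^ (β - 1) * (1 - φ r) ^ (α - 1))) := by
    intro r hr
    have hr' := Ioo_subset_Icc_self hr
    have hp := h.pos r hr'
    have h1 : 0 < Ψ r - Ψ s := sub_pos.2 (h.mono hs hr' hr.1)
    have h2 : 0 < Ψ t - Ψ r := sub_pos.2 (h.mono hr' ht hr.2)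
    have h3 : 1 - φ r = (Ψ t - Ψ r) / L := by
      simp only [hφ]; field_simp; rw [hLdef]; ring
    rw [abs_of_pos (div_pos hp hL), h3, smul_eq_mul]
    simp only [hφ]
    rw [Real.div_rpow h1.le hL.le, Real.div_rpow h2.le hL.le]
    have h4 : L ^ (α + β - 1) = L ^ (β - 1) * L ^ (α - 1) * L := by
      rw [← Real.rpow_add hL, ← Real.rpow_add_one hL.ne']; congr 1; ring
    rw [h4]
    have := (Real.rpow_pos_of_pos hL (β - 1)).ne'
    have := (Real.rpow_pos_of_pos hL (α - 1)).ne'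
    field_simp
  rw [integrableOn_Ioc_iff_integrableOn_Ioo, integral_Ioc_eq_integral_Ioo]
  constructor
  · exact IntegrableOn.congr_fun (i1.const_mul (L ^ (α + β - 1))) (fun r hr => (hpt r hr).symm)
      measurableSet_Ioo
  · rw [setIntegral_congr_fun measurableSet_Ioo hpt, integral_const_mul, ← e2, mul_comm]

/-- Integrability of the kernel of the fractional integral of order `α` at `t`. -/
def FI (Ψ : ℝ → ℝ) (a α : ℝ) (f : ℝ → ℝ) (t : ℝ) : Prop :=
  IntegrableOn (fun s => deriv Ψ s * (Ψ t - Ψ s) ^ (α - 1) * f s) (Ioc a t)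

lemma psiFracInt_pos {Ψ : ℝ → ℝ} {a α t : ℝ} (hα : 0 < α) (hat : a ≤ t) (f : ℝ → ℝ) :
    psiFracInt Ψ a α f t =
      (1 / Real.Gamma α) * ∫ s in Ioc a t, deriv Ψ s * (Ψ t - Ψ s) ^ (α - 1) * f s := by
  rw [psiFracInt, if_neg hα.ne', intervalIntegral.integral_of_le hat]

lemma ae_Ioo_of_Ioc (a t : ℝ) {P : ℝ → Prop} (h : ∀ s ∈ Ioo a t, P s) :
    ∀ᵐ s ∂(volume.restrict (Ioc a t)), P s := by
  rw [← restrict_Ioo_eq_restrict_Ioc]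
  exact (ae_restrict_iff' measurableSet_Ioo).2 (Eventually.of_forall h)

lemma FI.aesm {Ψ : ℝ → ℝ} {a α t : ℝ} {f : ℝ → ℝ} (h : GoodPsi Ψ a t) (hat : a < t)
    (hf : FI Ψ a α f t) : AEStronglyMeasurable f (volume.restrict (Ioc a t)) := by
  have hΨ : AEMeasurable Ψ (volume.restrict (Ioc a t)) :=
    (h.cont.mono Ioc_subset_Icc_self).aemeasurable measurableSet_Ioc
  have hk : AEMeasurable (fun s => deriv Ψ s * (Ψ t - Ψ s) ^ (α - 1))
      (volume.restrict (Ioc a t)) :=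
    (measurable_deriv Ψ).aemeasurable.mul ((hΨ.const_sub _).pow_const _)
  have := (hf.1.aemeasurable.div hk).aestronglyMeasurable
  refine this.congr (ae_Ioo_of_Ioc a t fun s hs => ?_)
  have hs' := Ioo_subset_Icc_self hs
  have h1 := h.pos s hs'
  have h2 : 0 < Ψ t - Ψ s := sub_pos.2 (h.mono hs' (right_mem_Icc.2 hat.le) hs.2)
  have h3 := Real.rpow_pos_of_pos h2 (α - 1)
  simp only [Pi.div_apply]
  field_simp

lemma semigroup {Ψ : ℝ → ℝ} {a α β t : ℝ} {f : ℝ → ℝ} (h : GoodPsi Ψ a t) (hat : a < t)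
    (hα : 0 < α) (hβ : 0 < β) (hf : FI Ψ a (α + β) f t) :
    FI Ψ a α (psiFracInt Ψ a β f) t ∧
      psiFracInt Ψ a α (psiFracInt Ψ a β f) t = psiFracInt Ψ a (α + β) f t := by
  have hB := ProbabilityTheory.beta_pos hα hβ
  set B := ProbabilityTheory.beta α β with hBdef
  set μ := volume.restrict (Ioc a t) with hμ
  have hfm := hf.aesm h hat
  have hΨ : AEMeasurable Ψ μ :=
    (h.cont.mono Ioc_subset_Icc_self).aemeasurable measurableSet_Ioc
  have hp : Measurable (deriv Ψ) := measurable_deriv Ψ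
  set H : ℝ → ℝ → ℝ := fun r s =>
    (deriv Ψ r * (Ψ t - Ψ r) ^ (α - 1)) * (deriv Ψ s * (Ψ r - Ψ s) ^ (β - 1) * f s) with hH
  set G : ℝ → ℝ → ℝ := fun r s => if s < r then H r s else 0 with hG
  have hkey : ∀ s ∈ Ioo a t, ∀ κ : ℝ,
      IntegrableOn (fun r => (deriv Ψ r * (Ψ t - Ψ r) ^ (α - 1)) *
        (deriv Ψ s * (Ψ r - Ψ s) ^ (β - 1) * κ)) (Ioc s t) ∧
      ∫ r in Ioc s t, (deriv Ψ r * (Ψ t - Ψ r) ^ (α - 1)) *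
        (deriv Ψ s * (Ψ r - Ψ s) ^ (β - 1) * κ) =
        B * (deriv Ψ s * (Ψ t - Ψ s) ^ (α + β - 1) * κ) := by
    intro s hs κ
    obtain ⟨i1, i2⟩ := psi_beta (h.sub hs.1.le le_rfl) hs.2 hα hβ
    have he : (fun r => (deriv Ψ r * (Ψ t - Ψ r) ^ (α - 1)) *
        (deriv Ψ s * (Ψ r - Ψ s) ^ (β - 1) * κ)) = fun r => (deriv Ψ s * κ) *
        (deriv Ψ r * (Ψ t - Ψ r) ^ (α - 1) * (Ψ r - Ψ s) ^ (β - 1)) := by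
      funext r; ring
    rw [he]
    refine ⟨i1.const_mul _, ?_⟩
    rw [integral_const_mul, i2]; ring
  have hinter : ∀ s ∈ Ioo a t, Ioi s ∩ Ioc a t = Ioc s t := by
    intro s hs; ext r; simp only [mem_inter_iff, mem_Ioi, mem_Ioc]
    exact ⟨fun q => ⟨q.1, q.2.2⟩, fun q => ⟨q.1, hs.1.trans q.1, q.2⟩⟩
  have hres : ∀ s ∈ Ioo a t, μ.restrict (Ioi s) = volume.restrict (Ioc s t) := by
    intro s hs
    rw [hμ, Measure.restrict_restrict measurableSet_Ioi, hinter s hs]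
  have hGi : ∀ s, (fun r => G r s) = (Ioi s).indicator (fun r => H r s) := by
    intro s; funext r; simp only [hG, indicator, mem_Ioi]
  have hG1 : ∀ s ∈ Ioo a t, Integrable (fun r => G r s) μ := by
    intro s hs
    rw [hGi, integrable_indicator_iff measurableSet_Ioi, IntegrableOn, hres s hs]
    exact (hkey s hs (f s)).1
  have hG2 : ∀ s ∈ Ioo a t, ∫ r, G r s ∂μ =
      B * (deriv Ψ s * (Ψ t - Ψ s) ^ (α + β - 1) * f s) := by
    intro s hs
    rw [hGi, integral_indicator measurableSet_Ioi, hres s hs]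
    exact (hkey s hs (f s)).2
  have hG3 : ∀ s ∈ Ioo a t, ∫ r, ‖G r s‖ ∂μ =
      B * ‖deriv Ψ s * (Ψ t - Ψ s) ^ (α + β - 1) * f s‖ := by
    intro s hs
    have hs' := Ioo_subset_Icc_self hs
    have e1 : (fun r => ‖G r s‖) = (Ioi s).indicator (fun r => ‖H r s‖) := by
      funext r; simp only [hG, indicator, mem_Ioi]; split_ifs <;> simp
    rw [e1, integral_indicator measurableSet_Ioi, hres s hs]
    have h2 : 0 < Ψ t - Ψ s := sub_pos.2 (h.mono hs' (right_mem_Icc.2 hat.le) hs.2)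
    rw [norm_mul, Real.norm_of_nonneg
      (mul_pos (h.pos s hs') (Real.rpow_pos_of_pos h2 _)).le, ← (hkey s hs ‖f s‖).2]
    refine setIntegral_congr_fun measurableSet_Ioc fun r hr => ?_
    have hr' : r ∈ Icc a t := ⟨(hs.1.trans hr.1).le, hr.2⟩
    have q1 : 0 ≤ Ψ t - Ψ r := sub_nonneg.2 (h.mono.monotoneOn hr' (right_mem_Icc.2 hat.le) hr.2)
    have q2 : 0 ≤ Ψ r - Ψ s := sub_nonneg.2 (h.mono.monotoneOn hs' hr' hr.1.le)
    simp only [hH]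
    rw [norm_mul, norm_mul (_ * _) (f s), Real.norm_of_nonneg
      (mul_nonneg (h.pos r hr').le (Real.rpow_nonneg q1 _)), Real.norm_of_nonneg
      (mul_nonneg (h.pos s hs').le (Real.rpow_nonneg q2 _))]
  have hGm : AEStronglyMeasurable (Function.uncurry G) (μ.prod μ) := by
    have m1 : AEMeasurable (fun z : ℝ × ℝ => Ψ z.1) (μ.prod μ) := hΨ.comp_fst
    have m2 : AEMeasurable (fun z : ℝ × ℝ => Ψ z.2) (μ.prod μ) := hΨ.comp_snd
    have m3 : AEMeasurable (fun z : ℝ × ℝ => f z.2) (μ.prod μ) := hfm.aemeasurable.comp_snd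
    have m4 : AEMeasurable (Function.uncurry H) (μ.prod μ) := by
      refine AEMeasurable.mul (AEMeasurable.mul ?_ ?_) (AEMeasurable.mul (AEMeasurable.mul ?_ ?_) m3)
      · exact (hp.comp measurable_fst).aemeasurable
      · exact (m1.const_sub _).pow_const _
      · exact (hp.comp measurable_snd).aemeasurable
      · exact (m1.sub m2).pow_const _
    have hset : MeasurableSet {z : ℝ × ℝ | z.2 < z.1} :=
      measurableSet_lt measurable_snd measurable_fst
    have e : Function.uncurry G = {z : ℝ × ℝ | z.2 < z.1}.indicator (Function.uncurry H) := by
      funext z; simp only [hG, Function.uncurry, indicator, mem_ofPred_eq]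
    rw [e]
    exact (m4.indicator hset).aestronglyMeasurable
  have hGint : Integrable (Function.uncurry G) (μ.prod μ) := by
    rw [integrable_prod_iff' hGm]
    refine ⟨ae_Ioo_of_Ioc a t hG1, ?_⟩
    refine (hf.norm.const_mul B).congr (ae_Ioo_of_Ioc a t fun s hs => ?_)
    exact (hG3 s hs).symm
  have hΓ := Real.Gamma_pos_of_pos hβ
  have hin : ∀ r ∈ Ioc a t, ∫ s, G r s ∂μ = Real.Gamma β *
      (deriv Ψ r * (Ψ t - Ψ r) ^ (α - 1) * psiFracInt Ψ a β f r) := by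
    intro r hr
    rw [psiFracInt_pos hβ hr.1.le]
    have e : (fun s => G r s) = (Iio r).indicator (fun s => H r s) := by
      funext s; simp only [hG, indicator, mem_Iio]
    have e2 : Iio r ∩ Ioc a t = Ioo a r := by
      ext s; simp only [mem_inter_iff, mem_Iio, mem_Ioc, mem_Ioo]
      exact ⟨fun q => ⟨q.2.1, q.1⟩, fun q => ⟨q.2, q.1, q.2.le.trans hr.2⟩⟩
    rw [e, integral_indicator measurableSet_Iio, hμ, Measure.restrict_restrict measurableSet_Iio,
      e2, ← integral_Ioc_eq_integral_Ioo, integral_const_mul]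
    field_simp
  have hL : Integrable (fun r => ∫ s, G r s ∂μ) μ := hGint.integral_prod_left
  have hswap := integral_integral_swap hGint
  rw [integral_congr_ae (ae_Ioo_of_Ioc a t hG2), integral_const_mul] at hswap
  rw [integral_congr_ae ((ae_restrict_iff' measurableSet_Ioc).2 (Eventually.of_forall hin)),
    integral_const_mul] at hswap
  constructor
  · have := (hL.congr ((ae_restrict_iff' measurableSet_Ioc).2
      (Eventually.of_forall hin))).const_mul (1 / Real.Gamma β)
    refine this.congr (Eventually.of_forall fun r => ?_)
    simp only
    field_simp
  · rw [psiFracInt_pos hα hat.le, psiFracInt_pos (add_pos hα hβ) hat.le]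
    have hΓα := Real.Gamma_pos_of_pos hα
    have hΓs := Real.Gamma_pos_of_pos (add_pos hα hβ)
    rw [hBdef, ProbabilityTheory.beta] at hswap
    rw [← mul_right_inj' hΓ.ne']
    rw [mul_left_comm, hswap]
    field_simp

lemma psiFracInt_power {Ψ : ℝ → ℝ} {a α β t : ℝ} (h : GoodPsi Ψ a t) (hat : a < t)
    (hα : 0 < α) (hβ : 0 < β) :
    FI Ψ a α (fun s => (Ψ s - Ψ a) ^ (β - 1)) t ∧
    psiFracInt Ψ a α (fun s => (Ψ s - Ψ a) ^ (β - 1)) t =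
      Real.Gamma β / Real.Gamma (α + β) * (Ψ t - Ψ a) ^ (α + β - 1) := by
  obtain ⟨h1, h2⟩ := psi_beta h hat hα hβ
  refine ⟨h1, ?_⟩
  have := Real.Gamma_pos_of_pos hα
  rw [psiFracInt_pos hα hat.le, h2, ProbabilityTheory.beta]
  field_simp

lemma psiFracInt_lin {Ψ : ℝ → ℝ} {a α t : ℝ} (hat : a < t) (hα : 0 < α) (κ : ℝ) {f g : ℝ → ℝ}
    (hf : FI Ψ a α f t) (hg : FI Ψ a α g t) :
    FI Ψ a α (fun s => κ * f s + g s) t ∧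
    psiFracInt Ψ a α (fun s => κ * f s + g s) t =
      κ * psiFracInt Ψ a α f t + psiFracInt Ψ a α g t := by
  have e : (fun s => deriv Ψ s * (Ψ t - Ψ s) ^ (α - 1) * (κ * f s + g s)) =
      fun s => κ * (deriv Ψ s * (Ψ t - Ψ s) ^ (α - 1) * f s) +
        deriv Ψ s * (Ψ t - Ψ s) ^ (α - 1) * g s := by
    funext s; ring
  have hf' := Integrable.const_mul hf κ
  constructor
  · rw [FI, e]; exact hf'.add hg
  · rw [psiFracInt_pos hα hat.le, e, integral_add hf' hg, integral_const_mul,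
      psiFracInt_pos hα hat.le, psiFracInt_pos hα hat.le]
    ring

lemma psiFracInt_congr {Ψ : ℝ → ℝ} {a b α t : ℝ} (ht : t ∈ Ioc a b) (hα : 0 < α) {f g : ℝ → ℝ}
    (hfg : ∀ᵐ s, s ∈ Ioo a b → f s = g s) :
    psiFracInt Ψ a α f t = psiFracInt Ψ a α g t := by
  rw [psiFracInt_pos hα ht.1.le, psiFracInt_pos hα ht.1.le, integral_Ioc_eq_integral_Ioo,
    integral_Ioc_eq_integral_Ioo]
  congr 1
  refine setIntegral_congr_ae measurableSet_Ioo ?_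
  filter_upwards [hfg] with s hs hs'
  rw [hs ⟨hs'.1, hs'.2.trans_le ht.2⟩]

lemma psiFracInt_one {Ψ : ℝ → ℝ} {a : ℝ} (f : ℝ → ℝ) (t : ℝ) :
    psiFracInt Ψ a 1 f t = ∫ s in a..t, deriv Ψ s * f s := by
  simp [psiFracInt]

lemma FI_one {Ψ : ℝ → ℝ} {a : ℝ} {f : ℝ → ℝ} {t : ℝ} :
    FI Ψ a 1 f t ↔ IntegrableOn (fun s => deriv Ψ s * f s) (Ioc a t) := by
  simp [FI]

lemma semigroup' {Ψ : ℝ → ℝ} {a α β t : ℝ} {f : ℝ → ℝ} (h : GoodPsi Ψ a t) (hat : a < t)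
    (hα : 0 < α) (hβ : 0 ≤ β) (hf : FI Ψ a (α + β) f t) :
    psiFracInt Ψ a α (psiFracInt Ψ a β f) t = psiFracInt Ψ a (α + β) f t := by
  rcases hβ.eq_or_lt with rfl | hβ
  · have : psiFracInt Ψ a 0 f = f := by funext s; simp [psiFracInt]
    rw [this, add_zero]
  · exact (semigroup h hat hα hβ hf).2

lemma psiFracInt_congr_ae {Ψ : ℝ → ℝ} {a b β : ℝ} (hβ : 0 ≤ β) {f g : ℝ → ℝ}
    (hfg : ∀ᵐ s, s ∈ Ioo a b → f s = g s) :
    ∀ᵐ s, s ∈ Ioo a b → psiFracInt Ψ a β f s = psiFracInt Ψ a β g s := by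
  rcases hβ.eq_or_lt with rfl | hβ
  · simpa [psiFracInt] using hfg
  · exact Eventually.of_forall fun s hs => psiFracInt_congr (Ioo_subset_Ioc_self hs) hβ hfg

/-- Fundamental theorem for the Ψ-Hilfer derivative:
`I^{μ,Ψ}_{a+} D^{μ,η,Ψ}_{a+} x(t) = x(t) - ((Ψ(t)-Ψ(a))^{ξ-1}/Γ(ξ)) I^{(1-η)(1-μ),Ψ}_{a+} x(a⁺)`
for `x ∈ C¹_{1-ξ,Ψ}([a,b],ℝ)`, where `ξ = μ + η(1-μ)`. -/
theorem psiFracInt_psiHilferDeriv (Ψ : ℝ → ℝ) (a b μ η ξ c : ℝ) (x : ℝ → ℝ) (hab : a < b)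
    (hΨC1 : ContDiffOn ℝ 1 Ψ (Icc a b)) (hΨmono : StrictMonoOn Ψ (Icc a b))
    (hΨ' : ∀ t ∈ Icc a b, deriv Ψ t ≠ 0)
    (hμ0 : 0 < μ) (hμ1 : μ ≤ 1) (hη0 : 0 ≤ η) (hη1 : η ≤ 1)
    (hξ : ξ = μ + η * (1 - μ))
    (hx_cont : ContinuousOn x (Icc a b))
    (hx_diff : DifferentiableOn ℝ x (Ioc a b))
    (hx'_weighted : ContinuousOn (fun t => (Ψ t - Ψ a) ^ (1 - ξ) * deriv x t) (Icc a b))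
    (hc : Tendsto (psiFracInt Ψ a ((1 - η) * (1 - μ)) x) (𝓝[>] a) (𝓝 c)) :
    ∀ t ∈ Ioc a b,
      psiFracInt Ψ a μ (psiHilferDeriv Ψ a μ η x) t =
        x t - ((Ψ t - Ψ a) ^ (ξ - 1) / Real.Gamma ξ) * c := by
  have hG := goodPsi_of Ψ a b hab hΨC1 hΨmono hΨ'
  have hξ0 : 0 < ξ := by
    have := mul_nonneg hη0 (sub_nonneg.2 hμ1)
    linarith
  have hGt : ∀ t ∈ Ioc a b, GoodPsi Ψ a t := fun t ht => hG.sub le_rfl ht.2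
  have ha : a ∈ Icc a b := left_mem_Icc.2 hab.le
  have hα2 : 0 ≤ η * (1 - μ) := mul_nonneg hη0 (sub_nonneg.2 hμ1)
  have hα1 : 0 ≤ (1 - η) * (1 - μ) := mul_nonneg (sub_nonneg.2 hη1) (sub_nonneg.2 hμ1)
  have hAξ : (1 - η) * (1 - μ) = 1 - ξ := by rw [hξ]; ring
  -- integrability of the derivative
  have hdx : IntegrableOn (deriv x) (Ioc a b) := by
    have h1 := (psi_beta hG hab one_pos hξ0).1
    have hc' : ContinuousOn (fun t => ((Ψ t - Ψ a) ^ (1 - ξ) * deriv x t) / deriv Ψ t)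
        (Icc a b) := hx'_weighted.div hG.dcont fun r hr => (hG.pos r hr).ne'
    have h2 := IntegrableOn.continuousOn_mul_of_subset hc' h1 isCompact_Icc measurableSet_Ioc
      Ioc_subset_Icc_self
    refine IntegrableOn.congr_fun h2 (fun r hr => ?_) measurableSet_Ioc
    have hr' := Ioc_subset_Icc_self hr
    have hp := hG.pos r hr'
    have h3 : 0 < Ψ r - Ψ a := sub_pos.2 (hG.mono ha hr' hr.1)
    have h4 : (Ψ r - Ψ a) ^ (1 - ξ) * (Ψ r - Ψ a) ^ (ξ - 1) = 1 := by
      rw [← Real.rpow_add h3]; simp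
    simp only [sub_self, Real.rpow_zero, mul_one]
    field_simp
    linear_combination (deriv x r) * h4
  set g : ℝ → ℝ := fun r => (1 / deriv Ψ r) * deriv x r with hg
  have hpg : ∀ r ∈ Icc a b, deriv Ψ r * g r = deriv x r := by
    intro r hr
    have hp := hG.pos r hr
    simp only [hg]; field_simp
  have hdxt : ∀ t ∈ Ioc a b, IntegrableOn (deriv x) (Ioc a t) := fun t ht =>
    hdx.mono_set (Ioc_subset_Ioc_right ht.2)
  have hsub : ∀ t ∈ Ioc a b, ∀ r ∈ Ioc a t, r ∈ Icc a b := fun t ht r hr =>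
    ⟨hr.1.le, hr.2.trans ht.2⟩
  have hg1 : ∀ t ∈ Ioc a b, FI Ψ a 1 g t := by
    intro t ht
    rw [FI_one]
    exact IntegrableOn.congr_fun (hdxt t ht) (fun r hr => (hpg r (hsub t ht r hr)).symm)
      measurableSet_Ioc
  have hgI : ∀ t ∈ Ioc a b, psiFracInt Ψ a 1 g t = x t - x a := by
    intro t ht
    rw [psiFracInt_one, ← intervalIntegral.integral_eq_sub_of_hasDerivAt_of_le (f' := deriv x)
      ht.1.le (hx_cont.mono (Icc_subset_Icc_right ht.2)) ?_
      ((intervalIntegrable_iff_integrableOn_Ioc_of_le ht.1.le).2 (hdxt t ht))]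
    · rw [intervalIntegral.integral_of_le ht.1.le, intervalIntegral.integral_of_le ht.1.le]
      exact setIntegral_congr_fun measurableSet_Ioc fun r hr => hpg r (hsub t ht r hr)
    · intro r hr
      have : Ioc a b ∈ 𝓝 r := Ioc_mem_nhds hr.1 (hr.2.trans_le ht.2)
      exact ((hx_diff r ⟨hr.1, hr.2.le.trans ht.2⟩).differentiableAt this).hasDerivAt
  intro t ht
  have hGtt := hGt t ht
  rcases hα1.eq_or_lt with hA | hA
  · -- the case `ξ = 1`
    have hξ1 : ξ = 1 := by linarith
    have h0 : psiFracInt Ψ a ((1 - η) * (1 - μ)) x = x := by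
      funext s; rw [← hA]; simp [psiFracInt]
    rw [h0] at hc
    have hca : c = x a := by
      have h1 : Tendsto x (𝓝[>] a) (𝓝 (x a)) :=
        ((hx_cont a ha).mono_of_mem_nhdsWithin (Icc_mem_nhdsGT hab))
      exact tendsto_nhds_unique hc h1
    have h2 : psiHilferDeriv Ψ a μ η x = psiFracInt Ψ a (η * (1 - μ)) g := by
      funext s; rw [psiHilferDeriv, h0]
    have h3 : μ + η * (1 - μ) = 1 := by rw [← hξ, hξ1]
    rw [h2, semigroup' hGtt ht.1 hμ0 hα2 (by rw [h3]; exact hg1 t ht), h3, hgI t ht, hca, hξ1]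
    simp
  · -- the case `ξ < 1`
    set A := (1 - η) * (1 - μ) with hAdef
    set F := psiFracInt Ψ a A x with hF
    have hgA : ∀ t ∈ Ioc a b, FI Ψ a (1 + A) g t := by
      intro t ht
      have hc' : ContinuousOn (fun s => (Ψ t - Ψ s) ^ (1 + A - 1)) (Icc a t) :=
        ContinuousOn.rpow_const (continuousOn_const.sub (hGt t ht).cont)
          fun _ _ => Or.inr (by linarith)
      refine IntegrableOn.congr_fun (IntegrableOn.continuousOn_mul_of_subset hc' (hdxt t ht)
        isCompact_Icc measurableSet_Ioc Ioc_subset_Icc_self) (fun r hr => ?_) measurableSet_Ioc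
      rw [← hpg r (hsub t ht r hr)]; ring
    set q : ℝ → ℝ := fun s => (Ψ s - Ψ a) ^ (A - 1) with hq
    set h : ℝ → ℝ := fun s => x a / Real.Gamma A * q s + psiFracInt Ψ a A g s with hh
    have hΓA := Real.Gamma_pos_of_pos hA
    -- `h` is integrable to order one and `F = I^1 h`
    have hh1 : ∀ t ∈ Ioc a b, FI Ψ a 1 h t ∧ F t = psiFracInt Ψ a 1 h t := by
      intro t ht
      obtain ⟨s1, s2⟩ := semigroup (hGt t ht) ht.1 one_pos hA (hgA t ht)
      obtain ⟨s3, s4⟩ := semigroup (hGt t ht) ht.1 hA one_pos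
        (by rw [add_comm]; exact hgA t ht)
      obtain ⟨p1, p2⟩ := psiFracInt_power (hGt t ht) ht.1 one_pos hA
      obtain ⟨p3, p4⟩ := psiFracInt_power (hGt t ht) ht.1 hA one_pos
      obtain ⟨l1, l2⟩ := psiFracInt_lin ht.1 one_pos (x a / Real.Gamma A) p1 s1
      obtain ⟨l3, l4⟩ := psiFracInt_lin ht.1 hA (x a) p3 s3
      refine ⟨l1, ?_⟩
      have e : F t = psiFracInt Ψ a A
          (fun s => x a * (Ψ s - Ψ a) ^ ((1:ℝ) - 1) + psiFracInt Ψ a 1 g s) t := by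
        refine psiFracInt_congr ht hA (Eventually.of_forall fun s hs => ?_)
        rw [hgI s (Ioo_subset_Ioc_self hs)]; simp
      rw [e, l4]
      refine Eq.trans ?_ l2.symm
      rw [p2, p4, s2, s4, Real.Gamma_one, add_comm A 1]
      field_simp
    have hint : IntervalIntegrable (fun s => deriv Ψ s * h s) volume a b :=
      (intervalIntegrable_iff_integrableOn_Ioc_of_le hab.le).2
        (FI_one.1 (hh1 b (right_mem_Ioc.2 hab)).1)
    have hF1 : ∀ t ∈ Ioc a b, F t = ∫ s in a..t, deriv Ψ s * h s := fun t ht => by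
      rw [(hh1 t ht).2, psiFracInt_one]
    -- `c = 0`
    have hc0 : c = 0 := by
      have h1 := intervalIntegral.continuousOn_primitive_interval' hint left_mem_uIcc
      rw [uIcc_of_le hab.le] at h1
      have h2 : Tendsto (fun t => ∫ s in a..t, deriv Ψ s * h s) (𝓝[>] a)
          (𝓝 (∫ s in a..a, deriv Ψ s * h s)) :=
        (h1 a ha).mono_of_mem_nhdsWithin (Icc_mem_nhdsGT hab)
      rw [intervalIntegral.integral_same] at h2
      refine tendsto_nhds_unique hc (h2.congr' ?_)
      filter_upwards [Ioc_mem_nhdsGT hab] with r hr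
      exact (hF1 r hr).symm
    -- the derivative of `F`
    have hder : ∀ᵐ r, r ∈ Ioo a b → (1 / deriv Ψ r) * deriv F r = h r := by
      filter_upwards [hint.ae_hasDerivAt_integral] with r hr hr'
      have hd := hr (by rw [uIcc_of_le hab.le]; exact Ioo_subset_Icc_self hr') a left_mem_uIcc
      have he : F =ᶠ[𝓝 r] fun t => ∫ s in a..t, deriv Ψ s * h s := by
        filter_upwards [Ioo_mem_nhds hr'.1 hr'.2] with u hu
        exact hF1 u (Ioo_subset_Ioc_self hu)
      have hp := hG.pos r (Ioo_subset_Icc_self hr')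
      rw [(hd.congr_of_eventuallyEq he).deriv]
      field_simp
    have hD : ∀ᵐ r, r ∈ Ioo a b → psiHilferDeriv Ψ a μ η x r =
        psiFracInt Ψ a (η * (1 - μ)) h r := psiFracInt_congr_ae hα2 hder
    -- `I^ξ h = x`
    have hξA : ξ + A = 1 := by linarith
    have hfin : FI Ψ a ξ h t ∧ psiFracInt Ψ a ξ h t = x t := by
      obtain ⟨s1, s2⟩ := semigroup hGtt ht.1 hξ0 hA (by rw [hξA]; exact hg1 t ht)
      obtain ⟨p1, p2⟩ := psiFracInt_power hGtt ht.1 hξ0 hA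
      obtain ⟨l1, l2⟩ := psiFracInt_lin ht.1 hξ0 (x a / Real.Gamma A) p1 s1
      refine ⟨l1, l2.trans ?_⟩
      rw [p2, s2, hξA, hgI t ht]
      simp only [sub_self, Real.rpow_zero, Real.Gamma_one]
      field_simp
      ring
    rw [psiFracInt_congr ht hμ0 hD, semigroup' hGtt ht.1 hμ0 hα2 (by rw [← hξ]; exact hfin.1),
      ← hξ, hfin.2, hc0]
    simp
end
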